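/- arXiv:1112.6160 — 2 statements merged into one kernel-verified Lean document; each statement's English description precedes it below -/
import Mathlib

section
/- Let E be a finite-dimensional real inner product space with dim E ≥ 2, let U ⊆ E, and let (w, β) be a cone field over U with 0 < β_x < π/2 for every x ∈ U. Then (w, β) is upper semicontinuous over U if and only if its complementary cone field (w, π/2 − β) (i.e., x ↦ (w_x, π/2 − β_x)) is lower semicontinuous over U. -/
open Real InnerProductGeometry

lemma aux_perp {E : Type*} [NormedAddCommGroup E] [InnerProductSpace ℝ E]
    [FiniteDimensional ℝ E] (hdim : 2 ≤ Module.finrank ℝ E) (u : E) :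
    ∃ e : E, ‖e‖ = 1 ∧ inner ℝ u e = 0 := by
  have h1 : Module.finrank ℝ (ℝ ∙ u) ≤ 1 := by simpa using finrank_span_le_card (R := ℝ) ({u} : Set E)
  have h2 := Submodule.finrank_add_finrank_orthogonal (ℝ ∙ u)
  have h3 : 0 < Module.finrank ℝ (ℝ ∙ u)ᗮ := by omega
  have := Module.finrank_pos_iff.mp h3
  obtain ⟨⟨z, hz⟩, hz0⟩ := exists_ne (0 : (ℝ ∙ u)ᗮ)
  have hz0' : z ≠ 0 := fun h => hz0 (Subtype.ext h)
  refine ⟨‖z‖⁻¹ • z, ?_, ?_⟩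
  · rw [norm_smul, norm_inv, norm_norm, inv_mul_cancel₀ (norm_ne_zero_iff.mpr hz0')]
  · rw [inner_smul_right, Submodule.mem_orthogonal_singleton_iff_inner_right.mp hz, mul_zero]

lemma aux_dec {E : Type*} [NormedAddCommGroup E] [InnerProductSpace ℝ E]
    [FiniteDimensional ℝ E] (hdim : 2 ≤ Module.finrank ℝ E) (u w : E)
    (hu : ‖u‖ = 1) (hw : ‖w‖ = 1) :
    ∃ e : E, ‖e‖ = 1 ∧ inner ℝ u e = 0 ∧
      w = cos (angle u w) • u - sin (angle u w) • e := by
  have hc := inner_eq_cos_angle_of_norm_eq_one hu hw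
  set θ := angle u w with hθ
  have hs : 0 ≤ sin θ := sin_angle_nonneg u w
  have huu : inner ℝ u u = (1 : ℝ) := by rw [real_inner_self_eq_norm_sq, hu]; norm_num
  have hww : inner ℝ w w = (1 : ℝ) := by rw [real_inner_self_eq_norm_sq, hw]; norm_num
  have hp : ‖cos θ • u - w‖ = sin θ := by
    rw [← sq_eq_sq₀ (norm_nonneg _) hs, ← real_inner_self_eq_norm_sq]
    simp only [inner_sub_left, inner_sub_right, real_inner_smul_left, real_inner_smul_right,
      real_inner_comm u w, huu, hww, hc]
    nlinarith [sin_sq_add_cos_sq θ]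
  have hup : inner ℝ u (cos θ • u - w) = 0 := by
    rw [inner_sub_right, real_inner_smul_right, huu, hc]; ring
  rcases eq_or_ne (sin θ) 0 with h0 | h0
  · obtain ⟨e, he, hue⟩ := aux_perp hdim u
    refine ⟨e, he, hue, ?_⟩
    rw [h0, norm_eq_zero, sub_eq_zero] at hp
    rw [h0, hp]; simp
  · refine ⟨(sin θ)⁻¹ • (cos θ • u - w), ?_, ?_, ?_⟩
    · rw [norm_smul, hp, norm_inv, Real.norm_of_nonneg hs, inv_mul_cancel₀ h0]
    · rw [real_inner_smul_right, hup, mul_zero]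
    · rw [smul_smul, mul_inv_cancel₀ h0]; simp

lemma aux_key {E : Type*} [NormedAddCommGroup E] [InnerProductSpace ℝ E]
    [FiniteDimensional ℝ E] (hdim : 2 ≤ Module.finrank ℝ E) (u w : E)
    (hu : ‖u‖ = 1) (hw : ‖w‖ = 1) (t b : ℝ) (ht : 0 ≤ t) (ht' : t ≤ π) (hb : b < π)
    (h : ∀ v : E, ‖v‖ = 1 → angle v u ≤ t → angle v w ≤ b) : angle u w + t ≤ b := by
  have hw0 : w ≠ 0 := by rw [← norm_ne_zero_iff, hw]; norm_num
  rcases le_or_gt (angle u w + t) π with hle | hgt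
  · obtain ⟨e, he, hue, hdec⟩ := aux_dec hdim u w hu hw
    have huu : inner ℝ u u = (1 : ℝ) := by rw [real_inner_self_eq_norm_sq, hu]; norm_num
    have hee : inner ℝ e e = (1 : ℝ) := by rw [real_inner_self_eq_norm_sq, he]; norm_num
    have heu : inner ℝ e u = 0 := by rw [real_inner_comm, hue]
    have hθ := angle_nonneg u w
    set θ := angle u w
    have hv : ‖cos t • u + sin t • e‖ = 1 := by
      rw [← sq_eq_sq₀ (norm_nonneg _) zero_le_one, ← real_inner_self_eq_norm_sq]
      simp only [inner_add_left, inner_add_right, real_inner_smul_left, real_inner_smul_right,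
        huu, hee, hue, heu]
      nlinarith [sin_sq_add_cos_sq t]
    have h1 : angle (cos t • u + sin t • e) u = t := by
      rw [angle, hv, hu]
      simp only [inner_add_left, real_inner_smul_left, huu, heu]
      simpa using arccos_cos ht ht'
    have h2 : angle (cos t • u + sin t • e) w = θ + t := by
      rw [angle, hv, hw]
      have : inner ℝ (cos t • u + sin t • e) w = cos (θ + t) := by
        rw [hdec]
        simp only [inner_add_left, inner_sub_right, real_inner_smul_left, real_inner_smul_right,
          huu, hee, hue, heu, cos_add]
        ring
      rw [this]
      simpa using arccos_cos (by linarith) hle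
    rw [← h2]
    exact h _ hv h1.le
  · exfalso
    have := h (-w) (by simpa using hw) (by rw [angle_neg_left, angle_comm]; linarith)
    rw [angle_neg_self_of_nonzero hw0] at this
    linarith


open Real InnerProductGeometry

/-- A cone field `(w, β)` over `U` (with all cones acute and nondegenerate) is upper
semicontinuous if and only if its complementary cone field `(w, π/2 − β)` is lower
semicontinuous. -/
theorem stmt2 {E : Type*} [NormedAddCommGroup E] [InnerProductSpace ℝ E]
    [FiniteDimensional ℝ E] (hdim : 2 ≤ Module.finrank ℝ E)
    (U : Set E) (w : E → E) (β : E → ℝ)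
    (hw : ∀ x ∈ U, ‖w x‖ = 1) (hβ : ∀ x ∈ U, 0 < β x ∧ β x < π / 2) :
    (∀ x ∈ U, ∀ ε > 0, ∃ η > 0, ∀ y ∈ U, dist x y < η →
        ∀ v : E, ‖v‖ = 1 → InnerProductGeometry.angle v (w y) ≤ β y →
          InnerProductGeometry.angle v (w x) ≤ β x + ε) ↔
    (∀ x ∈ U, ∀ ε : ℝ, 0 < ε → ε < π / 2 - β x → ∃ η > 0, ∀ y ∈ U, dist x y < η →
        ∀ v : E, ‖v‖ = 1 → InnerProductGeometry.angle v (w x) ≤ (π / 2 - β x) - ε →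
          InnerProductGeometry.angle v (w y) ≤ π / 2 - β y) := by
  constructor
  · intro H x hx ε hε hε'
    obtain ⟨η, hη, h⟩ := H x hx ε hε
    refine ⟨η, hη, fun y hy hd v hv hvx => ?_⟩
    have k := aux_key hdim (w y) (w x) (hw y hy) (hw x hx) (β y) (β x + ε) (hβ y hy).1.le
      (by linarith [(hβ y hy).2, pi_pos]) (by linarith [pi_pos]) (h y hy hd)
    have tri := angle_le_angle_add_angle v (w x) (w y)
    rw [angle_comm (w x)] at tri
    linarith
  · intro H x hx ε hε
    have hb := hβ x hx
    have m1 := min_le_left ε ((π / 2 - β x) / 2)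
    have m2 := min_le_right ε ((π / 2 - β x) / 2)
    obtain ⟨η, hη, h⟩ := H x hx (min ε ((π / 2 - β x) / 2))
      (lt_min hε (by linarith)) (by linarith)
    refine ⟨η, hη, fun y hy hd v hv hvy => ?_⟩
    have hby := hβ y hy
    have k := aux_key hdim (w x) (w y) (hw x hx) (hw y hy) _ (π / 2 - β y)
      (by linarith) (by linarith [lt_min hε (show 0 < (π / 2 - β x) / 2 by linarith)])
      (by linarith [pi_pos]) (h y hy hd)
    have tri := angle_le_angle_add_angle v (w y) (w x)
    rw [angle_comm (w y)] at tri
    linarith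
end

section
/- Let E be a finite-dimensional real inner product space, let K, L ⊆ E be nonempty compact sets with hausdorffDist K L ≤ δ, δ > 0, 0 < a ≤ b, μ ∈ [0,1), and let C satisfy μ < C ≤ 1 and C ≥ μ + 2·√(δ/(a+δ)). If no point y ∉ L with d_L(y) ∈ [a, b] is a C-critical point of d_L, then no point x ∉ K with d_K(x) ∈ [a+δ, b − 4δ/(C−μ) − δ] is a μ-critical point of d_K. -/
open Metric

lemma aux_compact {E : Type*} [NormedAddCommGroup E] (K : Set E) (hne : K.Nonempty)
    (hc : IsCompact K) (x : E) :
    {q ∈ K | dist x q = infDist x K}.Nonempty ∧ IsCompact {q ∈ K | dist x q = infDist x K} := by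
  obtain ⟨q, hq, hqd⟩ := hc.exists_infDist_eq_dist hne x
  have hcl : IsClosed {q : E | dist x q = infDist x K} :=
    isClosed_eq (by fun_prop) continuous_const
  exact ⟨⟨q, hq, hqd.symm⟩, hc.inter_right hcl⟩

lemma aux_gamma {E : Type*} [NormedAddCommGroup E] [InnerProductSpace ℝ E]
    [FiniteDimensional ℝ E] (K : Set E) (hne : K.Nonempty) (hc : IsCompact K) (x : E) :
    ∃ p ∈ closure (convexHull ℝ {q ∈ K | dist x q = infDist x K}),
      infDist x (convexHull ℝ {q ∈ K | dist x q = infDist x K}) = dist x p := by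
  have : ProperSpace E := FiniteDimensional.proper_real E
  have h := ((aux_compact K hne hc x).1.convexHull (𝕜 := ℝ)).closure
  obtain ⟨p, hp, hpd⟩ := isClosed_closure.exists_infDist_eq_dist h x
  exact ⟨p, hp, by rwa [infDist_closure] at hpd⟩

lemma aux_growth {E : Type*} [NormedAddCommGroup E] [InnerProductSpace ℝ E]
    [FiniteDimensional ℝ E] (K : Set E) (hne : K.Nonempty) (hc : IsCompact K) (x y : E) (μ : ℝ)
    (h : infDist x (convexHull ℝ {q ∈ K | dist x q = infDist x K}) ≤ μ * infDist x K) :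
    infDist y K ^ 2 ≤ infDist x K ^ 2 + 2 * (μ * infDist x K * dist y x) + dist y x ^ 2 := by
  obtain ⟨p, hp, hpd⟩ := aux_gamma K hne hc x
  rw [hpd] at h
  have hq : ∃ q ∈ {q ∈ K | dist x q = infDist x K}, 0 ≤ inner ℝ (y - x) (q - p) := by
    obtain ⟨hne', hc'⟩ := aux_compact K hne hc x
    obtain ⟨q, hq, hmax⟩ := hc'.exists_isMaxOn hne'
      (f := fun z => inner ℝ (y - x) z) (by fun_prop)
    refine ⟨q, hq, ?_⟩
    have hconv : Convex ℝ {z : E | inner ℝ (y - x) z ≤ inner ℝ (y - x) q} :=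
      convex_halfSpace_le (innerₛₗ ℝ (y - x)).isLinear _
    have hclosed : IsClosed {z : E | inner ℝ (y - x) z ≤ inner ℝ (y - x) q} :=
      isClosed_le (by fun_prop) continuous_const
    have hsub : {q ∈ K | dist x q = infDist x K} ⊆
        {z : E | inner ℝ (y - x) z ≤ inner ℝ (y - x) q} := fun z hz => hmax hz
    have : inner ℝ (y - x) p ≤ inner ℝ (y - x) q :=
      closure_minimal (convexHull_min hsub hconv) hclosed hp
    rw [inner_sub_right]
    linarith
  obtain ⟨q, ⟨hqK, hqd⟩, hqi⟩ := hq
  have h1 : infDist y K ≤ dist y q := infDist_le_dist_of_mem hqK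
  have h2 : infDist y K ^ 2 ≤ dist y q ^ 2 := pow_le_pow_left₀ infDist_nonneg h1 2
  have h3 : dist y q ^ 2 = dist y x ^ 2 + 2 * inner ℝ (y - x) (x - q) + dist x q ^ 2 := by
    rw [dist_eq_norm y q, dist_eq_norm y x, dist_eq_norm x q, ← norm_add_sq_real]
    congr 2; abel
  have h4 : inner ℝ (y - x) (x - q) = inner ℝ (y - x) (x - p) - inner ℝ (y - x) (q - p) := by
    rw [← inner_sub_right]; congr 1; abel
  have h5 : inner ℝ (y - x) (x - p) ≤ dist y x * dist x p := by
    rw [dist_eq_norm y x, dist_eq_norm x p]; exact real_inner_le_norm _ _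
  have h6 : dist y x * dist x p ≤ dist y x * (μ * infDist x K) :=
    mul_le_mul_of_nonneg_left h dist_nonneg
  rw [hqd] at h3
  nlinarith

lemma aux_ascent {E : Type*} [NormedAddCommGroup E] [InnerProductSpace ℝ E]
    [FiniteDimensional ℝ E] (L : Set E) (hne : L.Nonempty) (hc : IsCompact L) (y : E) (C : ℝ)
    (hC : 0 ≤ C)
    (h : ¬ infDist y (convexHull ℝ {q ∈ L | dist y q = infDist y L}) ≤ C * infDist y L)
    (ε : ℝ) (hε : 0 < ε) :
    ∃ z, dist z y < ε ∧ infDist y L + C * dist z y < infDist z L := by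
  obtain ⟨p, hp, hpd⟩ := aux_gamma L hne hc y
  rw [hpd] at h
  push Not at h
  have hproj : ∀ w ∈ closure (convexHull ℝ {q ∈ L | dist y q = infDist y L}),
      inner ℝ (y - p) (w - p) ≤ 0 := by
    rw [← norm_eq_iInf_iff_real_inner_le_zero (convex_convexHull ℝ _).closure hp, ← dist_eq_norm, ← hpd,
      ← infDist_closure, infDist_eq_iInf]
    simp [dist_eq_norm]
  set v := y - p with hv
  have hr : dist y p = ‖v‖ := dist_eq_norm _ _
  rw [hr] at h
  have hR : 0 ≤ infDist y L := infDist_nonneg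
  have hvpos : 0 < ‖v‖ := lt_of_le_of_lt (mul_nonneg hC hR) h
  by_contra! hcon
  obtain ⟨t, -, htpos, ht0⟩ := exists_seq_strictAnti_tendsto' (show (0:ℝ) < ε / ‖v‖ by positivity)
  have hdist : ∀ n, dist (y + t n • v) y = t n * ‖v‖ := by
    intro n
    rw [dist_eq_norm, add_sub_cancel_left, norm_smul, Real.norm_of_nonneg (htpos n).1.le]
  have hle : ∀ n, infDist (y + t n • v) L ≤ infDist y L + C * (t n * ‖v‖) := by
    intro n
    have := hcon (y + t n • v) (by
      rw [hdist]; exact (lt_div_iff₀ hvpos).1 (htpos n).2)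
    rwa [hdist] at this
  choose q hqL hqd using fun n => hc.exists_infDist_eq_dist hne (y + t n • v)
  obtain ⟨q₀, hq₀, φ, hφ, hlim⟩ := hc.tendsto_subseq hqL
  have htφ : Filter.Tendsto (fun n => t (φ n)) Filter.atTop (nhds 0) := ht0.comp hφ.tendsto_atTop
  have hq₀d : dist y q₀ = infDist y L := by
    have l1 : Filter.Tendsto (fun n => dist (y + t (φ n) • v) (q (φ n))) Filter.atTop
        (nhds (dist (y + (0:ℝ) • v) q₀)) :=
      (tendsto_const_nhds.add (htφ.smul_const v)).dist hlim
    have l2 : Filter.Tendsto (fun n => infDist (y + t (φ n) • v) L) Filter.atTop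
        (nhds (infDist (y + (0:ℝ) • v) L)) :=
      ((continuous_infDist_pt L).tendsto _).comp (tendsto_const_nhds.add (htφ.smul_const v))
    simp only [hqd] at l2
    have := tendsto_nhds_unique l1 l2
    simpa using this
  have hin := hproj q₀ (subset_closure (subset_convexHull ℝ _ ⟨hq₀, hq₀d⟩))
  have key : ∀ n, 2 * inner ℝ (y - q n) v ≤
      2 * (infDist y L * C * ‖v‖) + C ^ 2 * t n * ‖v‖ ^ 2 := by
    intro n
    have htn := (htpos n).1
    have e1 : infDist (y + t n • v) L ^ 2 =
        ‖y - q n‖ ^ 2 + 2 * (t n * inner ℝ (y - q n) v) + (t n * ‖v‖) ^ 2 := by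
      rw [hqd, dist_eq_norm, show y + t n • v - q n = (y - q n) + t n • v by abel,
        norm_add_sq_real, inner_smul_right, norm_smul, Real.norm_of_nonneg htn.le]
    have e2 : infDist y L ^ 2 ≤ ‖y - q n‖ ^ 2 := by
      rw [← dist_eq_norm]
      exact pow_le_pow_left₀ hR (infDist_le_dist_of_mem (hqL n)) 2
    have e3 := pow_le_pow_left₀ infDist_nonneg (hle n) 2
    have e4 : 0 ≤ (t n * ‖v‖) ^ 2 := sq_nonneg _
    refine le_of_mul_le_mul_left ?_ htn
    nlinarith
  have l3 : Filter.Tendsto (fun n => 2 * inner ℝ (y - q (φ n)) v) Filter.atTop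
      (nhds (2 * inner ℝ (y - q₀) v)) :=
    ((tendsto_const_nhds.sub hlim).inner tendsto_const_nhds).const_mul 2
  have l4 : Filter.Tendsto (fun n => 2 * (infDist y L * C * ‖v‖) + C ^ 2 * t (φ n) * ‖v‖ ^ 2)
      Filter.atTop (nhds (2 * (infDist y L * C * ‖v‖) + C ^ 2 * 0 * ‖v‖ ^ 2)) :=
    ((htφ.const_mul _).mul_const _).const_add _
  have hfin := le_of_tendsto_of_tendsto' l3 l4 (fun n => key (φ n))
  have e5 : inner ℝ (y - q₀) v = ‖v‖ ^ 2 - inner ℝ v (q₀ - p) := by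
    rw [← real_inner_self_eq_norm_sq, ← inner_sub_right, real_inner_comm]
    congr 1; rw [hv]; abel
  nlinarith

theorem stmt8 {E : Type*} [NormedAddCommGroup E] [InnerProductSpace ℝ E]
    [FiniteDimensional ℝ E]
    (K L : Set E) (hKne : K.Nonempty) (hKc : IsCompact K)
    (hLne : L.Nonempty) (hLc : IsCompact L)
    (δ : ℝ) (hδ : 0 < δ) (hH : hausdorffDist K L ≤ δ)
    (a b : ℝ) (ha : 0 < a) (hab : a ≤ b)
    (μ : ℝ) (hμ : μ ∈ Set.Ico (0 : ℝ) 1)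
    (C : ℝ) (hC1 : μ < C) (hC2 : C ≤ 1)
    (hC3 : μ + 2 * Real.sqrt (δ / (a + δ)) ≤ C)
    (hL : ∀ y : E, y ∉ L → infDist y L ∈ Set.Icc a b →
      ¬ (infDist y (convexHull ℝ {q ∈ L | dist y q = infDist y L}) ≤ C * infDist y L)) :
    ∀ x : E, x ∉ K → infDist x K ∈ Set.Icc (a + δ) (b - 4 * δ / (C - μ) - δ) →
      ¬ (infDist x (convexHull ℝ {q ∈ K | dist x q = infDist x K}) ≤ μ * infDist x K) := by
  intro x hx hxd hcrit
  obtain ⟨hd1, hd2⟩ := hxd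
  have hfin : hausdorffEDist K L ≠ ⊤ :=
    hausdorffEDist_ne_top_of_nonempty_of_bounded hKne hLne hKc.isBounded hLc.isBounded
  have hfin' : hausdorffEDist L K ≠ ⊤ := by rwa [hausdorffEDist_comm]
  have hKL : ∀ z, infDist z K ≤ infDist z L + δ := fun z => by
    have := infDist_le_infDist_add_hausdorffDist (x := z) hfin'
    rw [hausdorffDist_comm] at this
    linarith
  have hLK : ∀ z, infDist z L ≤ infDist z K + δ := fun z => by
    have := infDist_le_infDist_add_hausdorffDist (x := z) hfin
    linarith
  have hm : 0 < C - μ := sub_pos.2 hC1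
  have hC0 : 0 ≤ C := hμ.1.trans hC1.le
  set s := 4 * δ / (C - μ) with hs
  have hspos : 0 < s := by positivity
  have hsm : (C - μ) * s = 4 * δ := by rw [hs]; field_simp
  have hcont : ContinuousOn (fun y => infDist y L - C * dist y x) (closedBall x s) :=
    ((continuous_infDist_pt L).sub
      (continuous_const.mul (continuous_id.dist continuous_const))).continuousOn
  haveI : ProperSpace E := FiniteDimensional.proper_real E
  obtain ⟨y, hyb, hymax⟩ := (isCompact_closedBall x s).exists_isMaxOn
    ⟨x, mem_closedBall_self hspos.le⟩ hcont
  have hyx : infDist x L + C * dist y x ≤ infDist y L := by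
    have := hymax (mem_closedBall_self hspos.le)
    simp only [Set.mem_ofPred_eq, dist_self] at this
    linarith
  have hys : dist y x ≤ s := hyb
  have hKx := hKL x
  rcases hys.lt_or_eq with hlt | heq
  · have hCd : 0 ≤ C * dist y x := mul_nonneg hC0 dist_nonneg
    have hya : a ≤ infDist y L := by linarith
    have hyb' : infDist y L ≤ b := by
      have h1 := hLK y
      have h2 : infDist y K ≤ infDist x K + dist y x := infDist_le_infDist_add_dist
      linarith
    have hyL : y ∉ L := fun hmem => by
      rw [infDist_zero_of_mem hmem] at hya; linarith
    obtain ⟨z, hz1, hz2⟩ := aux_ascent L hLne hLc y C hC0 (hL y hyL ⟨hya, hyb'⟩)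
      (s - dist y x) (by linarith)
    have htri := dist_triangle z y x
    have := hymax (show z ∈ closedBall x s by rw [mem_closedBall]; linarith)
    simp only [Set.mem_ofPred_eq] at this
    have := mul_le_mul_of_nonneg_left htri hC0
    linarith
  · have hg := aux_growth K hKne hKc x y μ hcrit
    rw [heq] at hg hyx
    have hy2 := hLK y
    set d := infDist x K with hd
    have hdpos : 0 < d := by linarith
    have hlow : d + C * s - 2 * δ ≤ infDist y K := by linarith
    have hlow' : d + μ * s + 2 * δ ≤ infDist y K := by nlinarith
    have hsq : 4 * δ ≤ (C - μ) ^ 2 * d := by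
      have h1 : 2 * Real.sqrt (δ / (a + δ)) ≤ C - μ := by linarith
      have h2 := pow_le_pow_left₀ (by positivity) h1 2
      rw [mul_pow, Real.sq_sqrt (by positivity)] at h2
      have h3 : δ / (a + δ) * (a + δ) = δ := by field_simp
      have h4 : 2 ^ 2 * (δ / (a + δ)) * (a + δ) ≤ (C - μ) ^ 2 * (a + δ) :=
        mul_le_mul_of_nonneg_right h2 (by positivity)
      have h5 := mul_le_mul_of_nonneg_left hd1 (sq_nonneg (C - μ))
      linarith
    have hs2 : s ^ 2 ≤ 4 * δ * d := by
      have h1 : s ^ 2 * (4 * δ) ≤ s ^ 2 * ((C - μ) ^ 2 * d) :=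
        mul_le_mul_of_nonneg_left hsq (sq_nonneg _)
      have h2 : s ^ 2 * ((C - μ) ^ 2 * d) = (4 * δ) * (4 * δ * d) := by
        rw [← hsm]; ring
      refine le_of_mul_le_mul_left (a := 4 * δ) ?_ (by positivity)
      linarith
    have hμs : 0 ≤ μ * s := mul_nonneg hμ.1 hspos.le
    have h7 := pow_le_pow_left₀ (by positivity) hlow' 2
    nlinarith [mul_pos hδ hδ, mul_nonneg hμs hδ.le, mul_nonneg hμs hμs]
end
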